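/- arXiv:math/0405124 — 2 statements merged into one kernel-verified Lean document; each statement's English description precedes it below -/
import Mathlib

section
/- Let D be an integral domain and ⋆ a stable semistar operation on D (i.e., (E ∩ F)^⋆ = E^⋆ ∩ F^⋆ for all nonzero D-submodules E, F of K). Then D is ⋆-Noetherian if and only if D^⋆ is ⋆̇-Noetherian, where ⋆̇ is the semistar operation on the overring T := D^⋆ obtained by restricting ⋆ to nonzero T-submodules of K. -/
open scoped Pointwise

section SemistarDefs

variable {D : Type*} [CommRing D] [IsDomain D]
variable {K : Type*} [Field K] [Algebra D K] [IsFractionRing D K]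

/-- `star` is a semistar operation on the integral domain `D` with quotient field `K`:
a map on (nonzero) `D`-submodules of `K` satisfying `(xE)^⋆ = x·E^⋆`, monotonicity,
extensivity and idempotence. -/
structure IsSemistarOperation (star : Submodule D K → Submodule D K) : Prop where
  ne_bot : ∀ {E : Submodule D K}, E ≠ ⊥ → star E ≠ ⊥
  map_smul : ∀ (x : K), x ≠ 0 → ∀ {E : Submodule D K}, E ≠ ⊥ →
    star (Submodule.map (LinearMap.mulLeft D x) E) = Submodule.map (LinearMap.mulLeft D x) (star E)
  mono : ∀ {E F : Submodule D K}, E ≠ ⊥ → F ≠ ⊥ → E ≤ F → star E ≤ star F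
  le_star : ∀ {E : Submodule D K}, E ≠ ⊥ → E ≤ star E
  star_star : ∀ {E : Submodule D K}, E ≠ ⊥ → star (star E) = star E

/-- The image in `K` of an ideal `I` of `D`, as a `D`-submodule of `K`. -/
def idealExt (K : Type*) [Field K] [Algebra D K] (I : Ideal D) : Submodule D K :=
  Submodule.map (Algebra.linearMap D K) I

/-- `I` is a quasi-⋆-ideal: a nonzero ideal of `D` with `I = I^⋆ ∩ D`. -/
def QuasiStarIdeal (star : Submodule D K → Submodule D K) (I : Ideal D) : Prop :=
  I ≠ ⊥ ∧ Submodule.comap (Algebra.linearMap D K) (star (idealExt K I)) = I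

/-- `P` is a quasi-⋆-prime: a prime ideal which is a quasi-⋆-ideal. -/
def QuasiStarPrime (star : Submodule D K → Submodule D K) (P : Ideal D) : Prop :=
  P.IsPrime ∧ QuasiStarIdeal star P

/-- `M` is a quasi-⋆-maximal ideal: maximal in the set of proper quasi-⋆-ideals of `D`. -/
def QuasiStarMaximal (star : Submodule D K → Submodule D K) (M : Ideal D) : Prop :=
  QuasiStarIdeal star M ∧ M ≠ ⊤ ∧
    ∀ J : Ideal D, QuasiStarIdeal star J → J ≠ ⊤ → M ≤ J → J = M

/-- The finite-type semistar operation `⋆_f` associated to `⋆`: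
`E^{⋆_f} = ⋃ { F^⋆ : F nonzero finitely generated, F ⊆ E }`. -/
def finTypeOp (star : Submodule D K → Submodule D K) : Submodule D K → Submodule D K :=
  fun E => ⨆ (F : Submodule D K) (_ : F ≠ ⊥) (_ : F.FG) (_ : F ≤ E), star F

/-- The extension `E·D_Q` of a `D`-submodule `E` of `K` to the localization of `D` at
(the complement of) `Q`, described as `{ x ∈ K : s·x ∈ E for some s ∉ Q }`. -/
def extendToPrime (Q : Ideal D) (E : Submodule D K) : Submodule D K :=
  Submodule.span D {x : K | ∃ s : D, s ∉ Q ∧ algebraMap D K s * x ∈ E}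

/-- The stable semistar operation of finite type `⋆̃` associated to `⋆`:
`E^⋆̃ = ⋂ { E·D_Q : Q a quasi-⋆_f-maximal ideal of D }`. -/
def stableOp (star : Submodule D K → Submodule D K) : Submodule D K → Submodule D K :=
  fun E => ⨅ (Q : Ideal D) (_ : QuasiStarMaximal (finTypeOp star) Q), extendToPrime Q E

/-- A rank-one discrete valuation ring: a (domain which is a) local PID which is not a field. -/
def IsDVR (R : Type*) [CommRing R] : Prop :=
  ∃ h : IsDomain R, @IsDiscreteValuationRing R _ h

/-- A valuation domain. -/
def IsValuationDomain (R : Type*) [CommRing R] : Prop :=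
  ∃ h : IsDomain R, @ValuationRing R _ h

/-- `D` is a ⋆-almost Dedekind domain: `D_M` is a rank-one discrete valuation ring for
every quasi-⋆_f-maximal ideal `M` of `D`. -/
def StarADD (star : Submodule D K → Submodule D K) : Prop :=
  ∀ (M : Ideal D) [M.IsPrime], QuasiStarMaximal (finTypeOp star) M →
    IsDVR (Localization.AtPrime M)

/-- `D` is a Prüfer ⋆-multiplication domain: `D_M` is a valuation domain for every
quasi-⋆_f-maximal ideal `M` of `D`. -/
def StarPMD (star : Submodule D K → Submodule D K) : Prop :=
  ∀ (M : Ideal D) [M.IsPrime], QuasiStarMaximal (finTypeOp star) M →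
    IsValuationDomain (Localization.AtPrime M)

/-- `D` is ⋆-Noetherian: ascending chain condition on quasi-⋆-ideals. -/
def StarNoetherian (star : Submodule D K → Submodule D K) : Prop :=
  ∀ c : ℕ →o Ideal D, (∀ n, QuasiStarIdeal star (c n)) → ∃ n, ∀ m, n ≤ m → c m = c n

/-- `D` is a ⋆-Dedekind domain: ⋆-Noetherian and a P⋆MD. -/
def StarDedekind (star : Submodule D K → Submodule D K) : Prop :=
  StarNoetherian star ∧ StarPMD star

/-- `D` has the ⋆_f-finite character property: every nonzero element of `D` lies in only
finitely many quasi-⋆_f-maximal ideals. -/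
def StarFiniteCharacter (star : Submodule D K → Submodule D K) : Prop :=
  ∀ d : D, d ≠ 0 → {M : Ideal D | QuasiStarMaximal (finTypeOp star) M ∧ d ∈ M}.Finite

/-- The `v`-operation `E ↦ (D : (D : E))`. -/
def vOp : Submodule D K → Submodule D K := fun E => 1 / (1 / E)

/-- A nonzero `D`-submodule `E` of `K` is quasi-∗-invertible if `(E·(D^∗ : E))^∗ = D^∗`. -/
def QuasiStarInvertible (star : Submodule D K → Submodule D K) (E : Submodule D K) : Prop :=
  star (E * (star 1 / E)) = star (1 : Submodule D K)

/-- `D` has the ∗-cancellation law: for nonzero fractional ideals `A`, `B`, `C`,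
`(AB)^∗ = (AC)^∗` implies `B^∗ = C^∗`. -/
def StarCancellation (star : Submodule D K → Submodule D K) : Prop :=
  ∀ A B C : Submodule D K, A ≠ ⊥ → B ≠ ⊥ → C ≠ ⊥ →
    IsFractional (nonZeroDivisors D) A → IsFractional (nonZeroDivisors D) B →
    IsFractional (nonZeroDivisors D) C →
    star (A * B) = star (A * C) → star B = star C

/-- The ∗-dimension of `D`: the supremum of the lengths of chains of quasi-∗-prime ideals
of `D` (between `(0)` and a quasi-∗-prime). -/
noncomputable def starDim (star : Submodule D K → Submodule D K) : ℕ∞ :=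
  ⨆ (k : ℕ) (_ : ∃ c : Fin k → Ideal D, StrictMono c ∧ ∀ i, QuasiStarPrime star (c i)),
    (k : ℕ∞)

/-- A submodule `T` of `K` (containing the image of an integral domain with quotient
field `K`) is integrally closed (in `K`) if every `x ∈ K` satisfying a monic polynomial
equation with coefficients in `T` belongs to `T`. -/
def IntegrallyClosedSub (T : Submodule D K) : Prop :=
  ∀ x : K, (∃ (n : ℕ) (c : Fin n → K), (∀ i, c i ∈ T) ∧
    x ^ n = ∑ i : Fin n, c i * x ^ (i : ℕ)) → x ∈ T

/-- The content ideal `c(p)` of a polynomial: the ideal generated by its coefficients. -/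
def contentIdeal (p : Polynomial D) : Ideal D := Ideal.span (Set.range p.coeff)

/-- The multiplicative set `N(⋆) = { h ∈ D[X] : h ≠ 0, c(h)^⋆ = D^⋆ }` (as a submonoid,
via the closure of this multiplicatively closed set). -/
noncomputable def nagataMonoid (star : Submodule D K → Submodule D K) : Submonoid (Polynomial D) :=
  Submonoid.closure
    {p : Polynomial D | p ≠ 0 ∧ star (idealExt K (contentIdeal p)) = star (1 : Submodule D K)}

/-- The Nagata ring `Na(D,⋆) = D[X]_{N(⋆)}`. -/
abbrev NagataRing (star : Submodule D K → Submodule D K) :=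
  Localization (nagataMonoid star)

/-- `V` is a valuation overring of `D` (inside the quotient field `K`): `D ⊆ V ⊆ K` and
for every nonzero `x ∈ K`, `x ∈ V` or `x⁻¹ ∈ V`. -/
def IsValuationOverring (D : Type*) [CommRing D] {K : Type*} [Field K] [Algebra D K]
    (V : Subring K) : Prop :=
  (∀ d : D, algebraMap D K d ∈ V) ∧ ∀ x : K, x ≠ 0 → (x ∈ V ∨ x⁻¹ ∈ V)

/-- `V` is a ∗-valuation overring of `D`: a valuation overring such that `F^∗ ⊆ FV` for
every nonzero finitely generated `D`-submodule `F` of `K`. -/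
def IsStarValuationOverring (star : Submodule D K → Submodule D K) (V : Subring K) : Prop :=
  IsValuationOverring D V ∧
    ∀ F : Submodule D K, F ≠ ⊥ → F.FG →
      star F ≤ Submodule.span D ((F : Set K) * (V : Set K))

/-- `D` is a Krull domain: there is a family of rank-one discrete valuation overrings of `D`
with quotient field `K` whose intersection is `D`, with finite character. -/
def IsKrullDomain (D : Type*) [CommRing D] (K : Type*) [Field K] [Algebra D K] : Prop :=
  ∃ 𝒱 : Set (Subring K),
    (∀ V ∈ 𝒱, (∀ d : D, algebraMap D K d ∈ V) ∧ IsDVR V ∧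
      ∀ x : K, ∃ a ∈ V, ∃ b ∈ V, b ≠ 0 ∧ x * b = a) ∧
    (⋂ V ∈ 𝒱, (V : Set K)) = Set.range (algebraMap D K) ∧
    ∀ d : D, d ≠ 0 → {V ∈ 𝒱 | ¬ ∃ y ∈ V, algebraMap D K d * y = 1}.Finite

end SemistarDefs

section Statement

variable {D : Type*} [CommRing D] [IsDomain D]
variable {K : Type*} [Field K] [Algebra D K] [IsFractionRing D K]

theorem aux_idealExt_ne_bot {I : Ideal D} (h : I ≠ ⊥) : idealExt K I ≠ ⊥ := by
  obtain ⟨x, hx, hx0⟩ := Submodule.exists_mem_ne_zero_of_ne_bot h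
  refine (Submodule.ne_bot_iff _).2 ⟨algebraMap D K x, ⟨x, hx, rfl⟩, ?_⟩
  intro h0
  exact hx0 ((IsFractionRing.injective D K) (by rw [h0, map_zero]))

theorem aux_one_ne_bot : (1 : Submodule D K) ≠ ⊥ :=
  (Submodule.ne_bot_iff _).2 ⟨1, Submodule.one_le.1 le_rfl, one_ne_zero⟩

theorem aux_idealExt_le_one (I : Ideal D) : idealExt K I ≤ 1 := by
  rintro _ ⟨x, _, rfl⟩
  exact Submodule.mem_one.2 ⟨x, rfl⟩

theorem aux_idealExt_comap (J : Submodule D K) :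
    idealExt K (Submodule.comap (Algebra.linearMap D K) J) = J ⊓ 1 := by
  ext y
  constructor
  · rintro ⟨x, hx, rfl⟩
    exact ⟨hx, Submodule.mem_one.2 ⟨x, rfl⟩⟩
  · rintro ⟨hy, h1⟩
    obtain ⟨x, rfl⟩ := Submodule.mem_one.1 h1
    exact ⟨x, hy, rfl⟩

theorem aux_comap_ne_bot {J : Submodule D K} (h : J ≠ ⊥) :
    (Submodule.comap (Algebra.linearMap D K) J : Ideal D) ≠ ⊥ := by
  obtain ⟨y, hy, hy0⟩ := Submodule.exists_mem_ne_zero_of_ne_bot h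
  obtain ⟨a, b, hb, rfl⟩ := IsFractionRing.div_surjective (A := D) y
  have hb0 : algebraMap D K b ≠ 0 := IsFractionRing.to_map_ne_zero_of_mem_nonZeroDivisors hb
  refine (Submodule.ne_bot_iff _).2 ⟨a, ?_, ?_⟩
  · have := J.smul_mem b hy
    rw [Algebra.smul_def, mul_div_cancel₀ _ hb0] at this
    exact this
  · rintro rfl
    simp at hy0

theorem aux_star_mul_mem {star : Submodule D K → Submodule D K} (hstar : IsSemistarOperation star)
    {E : Submodule D K} (hE : E ≠ ⊥) (t : K) (ht : t ∈ star (1 : Submodule D K)) (j : K)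
    (hj : j ∈ star E) : t * j ∈ star E := by
  by_cases hj0 : j = 0
  · simp [hj0]
  have hle : Submodule.map (LinearMap.mulLeft D j) (1 : Submodule D K) ≤ star E := by
    rintro _ ⟨x, hx, rfl⟩
    obtain ⟨d, rfl⟩ := Submodule.mem_one.1 hx
    have := (star E).smul_mem d hj
    rw [Algebra.smul_def, mul_comm] at this
    exact this
  have hne : Submodule.map (LinearMap.mulLeft D j) (1 : Submodule D K) ≠ ⊥ :=
    (Submodule.ne_bot_iff _).2 ⟨j, ⟨1, Submodule.one_le.1 le_rfl, by simp⟩, hj0⟩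
  have h := hstar.mono hne (hstar.ne_bot hE) hle
  rw [hstar.star_star hE, hstar.map_smul j hj0 aux_one_ne_bot] at h
  exact h ⟨t, ht, by simp [mul_comm]⟩

/-- `D` an integral domain, `⋆` a stable semistar operation on `D`. Then
`D` is ⋆-Noetherian iff `D^⋆` is `⋆̇`-Noetherian, `⋆̇` being the restriction of `⋆` to the
(nonzero) `D^⋆`-submodules of `K`; i.e. iff the ascending chain condition holds for the
nonzero ideals `J` of the overring `T := D^⋆` (the `D`-submodules of `K` contained in `T`
and stable under multiplication by elements of `T`) satisfying `J = J^⋆ ∩ T`. -/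
theorem starNoetherian_iff_overring_noetherian_of_stable
    (star : Submodule D K → Submodule D K) (hstar : IsSemistarOperation star)
    (hstable : ∀ E F : Submodule D K, E ≠ ⊥ → F ≠ ⊥ → star (E ⊓ F) = star E ⊓ star F) :
    StarNoetherian star ↔
      ∀ c : ℕ →o Submodule D K,
        (∀ n, c n ≠ ⊥ ∧ c n ≤ star (1 : Submodule D K) ∧
          (∀ t ∈ star (1 : Submodule D K), ∀ j ∈ c n, t * j ∈ c n) ∧
          star (c n) ⊓ star (1 : Submodule D K) = c n) →
        ∃ n, ∀ m, n ≤ m → c m = c n := by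
  constructor
  · intro hN c hc
    have h1 := aux_one_ne_bot (D := D) (K := K)
    have hcs : ∀ n, star (c n) = c n := by
      intro n
      obtain ⟨hne, hle, -, heq⟩ := hc n
      have h := hstar.mono hne (hstar.ne_bot h1) hle
      rw [hstar.star_star h1] at h
      rwa [inf_eq_left.2 h] at heq
    have key : ∀ n, star (idealExt K (Submodule.comap (Algebra.linearMap D K) (c n))) = c n := by
      intro n
      rw [aux_idealExt_comap, hstable _ _ (hc n).1 h1, hcs n]
      exact inf_eq_left.2 (hc n).2.1
    obtain ⟨n, hn⟩ := hN
      ⟨fun n => Submodule.comap (Algebra.linearMap D K) (c n),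
        fun a b hab => Submodule.comap_mono (c.monotone hab)⟩
      (fun n => ⟨aux_comap_ne_bot (hc n).1,
        congrArg (Submodule.comap (Algebra.linearMap D K)) (key n)⟩)
    refine ⟨n, fun m hm => ?_⟩
    have h : Submodule.comap (Algebra.linearMap D K) (c m)
      = Submodule.comap (Algebra.linearMap D K) (c n) := hn m hm
    rw [← key m, ← key n, h]
  · intro hN c hc
    have h1 := aux_one_ne_bot (D := D) (K := K)
    have hne : ∀ n, idealExt K (c n) ≠ ⊥ := fun n => aux_idealExt_ne_bot (hc n).1
    have hle : ∀ n, star (idealExt K (c n)) ≤ star 1 := fun n =>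
      hstar.mono (hne n) h1 (aux_idealExt_le_one _)
    obtain ⟨n, hn⟩ := hN
      ⟨fun n => star (idealExt K (c n)),
        fun a b hab => hstar.mono (hne a) (hne b) (Submodule.map_mono (c.monotone hab))⟩
      (fun n => ⟨hstar.ne_bot (hne n), hle n, aux_star_mul_mem hstar (hne n), by
        change star (star (idealExt K (c n))) ⊓ star 1 = star (idealExt K (c n))
        rw [hstar.star_star (hne n)]
        exact inf_eq_left.2 (hle n)⟩)
    refine ⟨n, fun m hm => ?_⟩
    have h : star (idealExt K (c m)) = star (idealExt K (c n)) := hn m hm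
    rw [← (hc m).2, ← (hc n).2, h]

end Statement
end

section
/- Let D be an integral domain and ⋆ a semistar operation on D. If D is ⋆̃-Noetherian, then D_M is a Noetherian ring for each M ∈ M(⋆_f). Conversely, if D has the ⋆_f-finite character property and D_M is Noetherian for each M ∈ M(⋆_f), then D is ⋆̃-Noetherian. -/
open scoped Pointwise

section Helpers

variable {D : Type*} [CommRing D] [IsDomain D]
variable {K : Type*} [Field K] [Algebra D K] [IsFractionRing D K]

lemma aux_mem_idealExt (I : Ideal D) (x : D) : algebraMap D K x ∈ idealExt K I ↔ x ∈ I := by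
  unfold idealExt
  rw [Submodule.mem_map]
  constructor
  · rintro ⟨y, hy, h⟩
    rw [Algebra.linearMap_apply] at h
    rwa [← IsFractionRing.injective D K h]
  · intro h
    exact ⟨x, h, rfl⟩

lemma aux_finType_mono (star : Submodule D K → Submodule D K) {E F : Submodule D K} (h : E ≤ F) :
    finTypeOp star E ≤ finTypeOp star F := by
  unfold finTypeOp
  refine iSup_le fun G => iSup_le fun h1 => iSup_le fun h2 => iSup_le fun h3 => ?_
  exact le_iSup_of_le G (le_iSup_of_le h1 (le_iSup_of_le h2 (le_iSup_of_le (h3.trans h) le_rfl)))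

lemma aux_finType_le {star : Submodule D K → Submodule D K} (hstar : IsSemistarOperation star)
    (E : Submodule D K) : E ≤ finTypeOp star E := by
  intro x hx
  by_cases h0 : x = 0
  · rw [h0]; exact zero_mem _
  have h1 : Submodule.span D {x} ≠ ⊥ := by
    rwa [Ne, Submodule.span_singleton_eq_bot]
  have h2 : (Submodule.span D {x}).FG := Submodule.fg_span_singleton x
  have h3 : Submodule.span D {x} ≤ E := by
    rwa [Submodule.span_singleton_le_iff_mem]
  have : star (Submodule.span D {x}) ≤ finTypeOp star E := by
    unfold finTypeOp
    exact le_iSup_of_le _ (le_iSup_of_le h1 (le_iSup_of_le h2 (le_iSup_of_le h3 le_rfl)))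
  exact this (hstar.le_star h1 (Submodule.mem_span_singleton_self x))

lemma aux_finType_smul {star : Submodule D K → Submodule D K} (hstar : IsSemistarOperation star)
    (b : K) (hb : b ≠ 0) (E : Submodule D K) :
    Submodule.map (LinearMap.mulLeft D b) (finTypeOp star E) ≤
      finTypeOp star (Submodule.map (LinearMap.mulLeft D b) E) := by
  conv_lhs => unfold finTypeOp
  simp only [Submodule.map_iSup]
  refine iSup_le fun G => iSup_le fun h1 => iSup_le fun h2 => iSup_le fun h3 => ?_
  rw [← hstar.map_smul b hb h1]
  have h1' : Submodule.map (LinearMap.mulLeft D b) G ≠ ⊥ := by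
    intro h
    apply h1
    rw [eq_bot_iff]
    intro x hx
    have := Submodule.mem_map_of_mem (f := LinearMap.mulLeft D b) hx
    rw [h, Submodule.mem_bot, LinearMap.mulLeft_apply] at this
    simpa [hb] using this
  unfold finTypeOp
  exact le_iSup_of_le _ (le_iSup_of_le h1' (le_iSup_of_le (h2.map _)
    (le_iSup_of_le (Submodule.map_mono h3) le_rfl)))

lemma aux_prime {star : Submodule D K → Submodule D K} (hstar : IsSemistarOperation star)
    {M : Ideal D} (hM : QuasiStarMaximal (finTypeOp star) M) : M.IsPrime := by
  obtain ⟨⟨hM0, hMq⟩, hMt, hmax⟩ := hM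
  refine ⟨hMt, ?_⟩
  intro a b hab
  by_contra! hcon
  obtain ⟨ha, hb⟩ := hcon
  have hb0 : algebraMap D K b ≠ 0 := by
    intro h
    rw [map_eq_zero_iff _ (IsFractionRing.injective D K)] at h
    exact hb (h ▸ zero_mem _)
  let J : Ideal D := Submodule.comap (LinearMap.mulLeft D b) M
  have hJ : ∀ x, x ∈ J ↔ b * x ∈ M := fun x => Iff.rfl
  have hMJ : M ≤ J := fun x hx => (hJ x).2 (M.mul_mem_left _ hx)
  have hJt : J ≠ ⊤ := by
    intro h
    have : (1 : D) ∈ J := h ▸ Submodule.mem_top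
    rw [hJ, mul_one] at this
    exact hb this
  have hJq : QuasiStarIdeal (finTypeOp star) J := by
    refine ⟨fun h => hM0 (by rw [h] at hMJ; exact le_bot_iff.1 hMJ), le_antisymm ?_ ?_⟩
    · intro x hx
      rw [hJ, ← hMq, Submodule.mem_comap]
      rw [Submodule.mem_comap] at hx
      have h1 := aux_finType_smul hstar _ hb0 _ (Submodule.mem_map_of_mem hx)
      rw [LinearMap.mulLeft_apply] at h1
      have h2 : Submodule.map (LinearMap.mulLeft D (algebraMap D K b)) (idealExt K J)
          ≤ idealExt K M := by
        rintro _ ⟨_, ⟨z, hz, rfl⟩, rfl⟩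
        rw [LinearMap.mulLeft_apply, Algebra.linearMap_apply, ← map_mul, aux_mem_idealExt]
        exact hz
      have h3 := aux_finType_mono star h2 h1
      simpa using h3
    · intro x hx
      rw [Submodule.mem_comap]
      exact aux_finType_le hstar _ ((aux_mem_idealExt J x).2 hx)
  have := hmax J hJq hJt hMJ
  apply ha
  rw [← this, hJ, mul_comm]
  exact hab

lemma aux_mem_extend {Q : Ideal D} (hQ : Q.IsPrime) (I : Ideal D) (x : D) :
    algebraMap D K x ∈ extendToPrime Q (idealExt K I) ↔ ∃ s, s ∉ Q ∧ s * x ∈ I := by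
  constructor
  · intro h
    have key : ∀ y ∈ extendToPrime Q (idealExt K I),
        ∃ s : D, s ∉ Q ∧ algebraMap D K s * y ∈ idealExt K I := by
      intro y hy
      unfold extendToPrime at hy
      induction hy using Submodule.span_induction with
      | mem y hy => exact hy
      | zero => exact ⟨1, fun h => hQ.ne_top ((Ideal.eq_top_iff_one _).2 h), by simp⟩
      | add y z _ _ h1 h2 =>
        obtain ⟨s, hs, h1⟩ := h1
        obtain ⟨t, ht, h2⟩ := h2
        refine ⟨s * t, fun h => (hQ.mem_or_mem h).elim hs ht, ?_⟩
        have e : algebraMap D K (s * t) * (y + z) =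
            t • (algebraMap D K s * y) + s • (algebraMap D K t * z) := by
          rw [Algebra.smul_def, Algebra.smul_def, map_mul]; ring
        rw [e]
        exact add_mem (Submodule.smul_mem _ _ h1) (Submodule.smul_mem _ _ h2)
      | smul a y _ h1 =>
        obtain ⟨s, hs, h1⟩ := h1
        refine ⟨s, hs, ?_⟩
        rw [mul_smul_comm]
        exact Submodule.smul_mem _ _ h1
    obtain ⟨s, hs, h⟩ := key _ h
    refine ⟨s, hs, ?_⟩
    rwa [← map_mul, aux_mem_idealExt] at h
  · rintro ⟨s, hs, h⟩
    refine Submodule.subset_span ⟨s, hs, ?_⟩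
    rwa [← map_mul, aux_mem_idealExt]

lemma aux_mem_stable {star : Submodule D K → Submodule D K} (hstar : IsSemistarOperation star)
    (I : Ideal D) (x : D) :
    x ∈ Submodule.comap (Algebra.linearMap D K) (stableOp star (idealExt K I)) ↔
      ∀ Q, QuasiStarMaximal (finTypeOp star) Q → ∃ s, s ∉ Q ∧ s * x ∈ I := by
  rw [Submodule.mem_comap, Algebra.linearMap_apply]
  unfold stableOp
  simp only [Submodule.mem_iInf]
  exact forall₂_congr fun Q hQ => aux_mem_extend (aux_prime hstar hQ) I x

lemma aux_mem_map (M : Ideal D) [M.IsPrime] (I : Ideal D) (x : D) :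
    algebraMap D (Localization.AtPrime M) x ∈ I.map (algebraMap D (Localization.AtPrime M)) ↔
      ∃ s, s ∉ M ∧ s * x ∈ I := by
  rw [IsLocalization.algebraMap_mem_map_algebraMap_iff M.primeCompl]
  rfl

end Helpers

section Statement

variable {D : Type*} [CommRing D] [IsDomain D]
variable {K : Type*} [Field K] [Algebra D K] [IsFractionRing D K]

/-- `D` an integral domain, `⋆` a semistar operation on `D`. If `D` is
⋆̃-Noetherian then `D_M` is Noetherian for each quasi-⋆_f-maximal ideal `M`; conversely, if
`D` has the ⋆_f-finite character property and `D_M` is Noetherian for each quasi-⋆_f-maximal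
ideal `M`, then `D` is ⋆̃-Noetherian. -/
theorem stableOp_noetherian_localizations
    (star : Submodule D K → Submodule D K) (hstar : IsSemistarOperation star) :
    (StarNoetherian (stableOp star) →
      ∀ (M : Ideal D) [M.IsPrime], QuasiStarMaximal (finTypeOp star) M →
        IsNoetherianRing (Localization.AtPrime M)) ∧
    (StarFiniteCharacter star →
      (∀ (M : Ideal D) [M.IsPrime], QuasiStarMaximal (finTypeOp star) M →
        IsNoetherianRing (Localization.AtPrime M)) →
      StarNoetherian (stableOp star)) := by
  constructor
  · intro hN M _ hM
    rw [isNoetherianRing_iff, ← monotone_stabilizes_iff_noetherian]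
    intro f
    by_cases hf : ∀ n, f n = ⊥
    · exact ⟨0, fun m _ => by rw [hf, hf]⟩
    push Not at hf
    obtain ⟨k, hk⟩ := hf
    let φ := algebraMap D (Localization.AtPrime M)
    have hmc : ∀ J : Ideal (Localization.AtPrime M), (J.comap φ).map φ = J :=
      fun J => IsLocalization.map_comap M.primeCompl _ J
    let c : ℕ →o Ideal D := ⟨fun n => Ideal.comap φ (f (n + k)),
      fun a b hab => Ideal.comap_mono (f.monotone (Nat.add_le_add_right hab k))⟩
    obtain ⟨n, hn⟩ := hN c (by
      intro n
      refine ⟨?_, le_antisymm ?_ ?_⟩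
      · intro h
        have h1 : f (n + k) = ⊥ := by
          rw [← hmc (f (n + k))]
          change Ideal.map φ (c n) = ⊥
          rw [h, Ideal.map_bot]
        have h2 : f k ≤ f (n + k) := f.monotone (by omega)
        rw [h1] at h2
        exact hk (le_bot_iff.1 h2)
      · intro x hx
        obtain ⟨s, hs, h⟩ := (aux_mem_stable hstar _ x).1 hx M hM
        have h1 := (aux_mem_map M (c n) x).2 ⟨s, hs, h⟩
        change φ x ∈ Ideal.map φ (Ideal.comap φ (f (n + k))) at h1
        rw [hmc] at h1
        exact h1
      · intro x hx
        rw [aux_mem_stable hstar]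
        intro Q hQ
        exact ⟨1, fun h => hQ.2.1 ((Ideal.eq_top_iff_one _).2 h), by simpa using hx⟩)
    refine ⟨n + k, fun m hm => ?_⟩
    have h1 := hn (m - k) (by omega)
    have h2 : m - k + k = m := by omega
    have h3 := congrArg (Ideal.map φ) h1
    change Ideal.map φ (Ideal.comap φ (f (m - k + k))) =
      Ideal.map φ (Ideal.comap φ (f (n + k))) at h3
    rw [hmc, hmc, h2] at h3
    exact h3.symm
  · intro hF hL c hc
    obtain ⟨d, hd, hd0⟩ := Submodule.exists_mem_ne_zero_of_ne_bot (hc 0).1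
    have hfin := hF d hd0
    have hst : ∀ Q, ∃ n, QuasiStarMaximal (finTypeOp star) Q →
        ∀ m, n ≤ m → ∀ x ∈ c m, ∃ s, s ∉ Q ∧ s * x ∈ c n := by
      intro Q
      by_cases hQ : QuasiStarMaximal (finTypeOp star) Q
      · haveI := aux_prime hstar hQ
        have hno := hL Q hQ
        rw [isNoetherianRing_iff, ← monotone_stabilizes_iff_noetherian] at hno
        obtain ⟨n, hn⟩ := hno ⟨fun n => (c n).map (algebraMap D (Localization.AtPrime Q)),
          fun a b hab => Ideal.map_mono (c.monotone hab)⟩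
        refine ⟨n, fun _ m hm x hx => ?_⟩
        rw [← aux_mem_map]
        have h1 : (c n).map (algebraMap D (Localization.AtPrime Q)) =
          (c m).map (algebraMap D (Localization.AtPrime Q)) := hn m hm
        rw [h1]
        exact Ideal.mem_map_of_mem _ hx
      · exact ⟨0, fun h => absurd h hQ⟩
    choose g hg using hst
    refine ⟨hfin.toFinset.sup g, fun m hm => le_antisymm ?_ (c.monotone hm)⟩
    intro x hx
    rw [← (hc _).2, aux_mem_stable hstar]
    intro Q hQ
    by_cases hdQ : d ∈ Q
    · have hle : g Q ≤ hfin.toFinset.sup g :=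
        Finset.le_sup (f := g) (hfin.mem_toFinset.2 ⟨hQ, hdQ⟩)
      obtain ⟨s, hs, h⟩ := hg Q hQ m (hle.trans hm) x hx
      exact ⟨s, hs, c.monotone hle h⟩
    · exact ⟨d, hdQ, Ideal.mul_mem_right _ _ (c.monotone (Nat.zero_le _) hd)⟩

end Statement
end
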